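/- arXiv:gr-qc/9806113 — 2 statements merged into one kernel-verified Lean document; each statement's English description precedes it below -/
import Mathlib

section
/- Assume α > 1. Let (p,q) be a solution of the planar system on (−∞, τ₀] with (p(τ), q(τ)) ∈ Ω for all τ ≤ τ₀, not identically equal to the equilibrium (1/√2, 0). Then the set of limit points of (p(τ), q(τ)) as τ → −∞ (i.e. the set of x ∈ ℝ² for which there exists a sequence τₙ → −∞ with (p(τₙ), q(τₙ)) → x) is exactly the boundary curve ∂Ω = {(p,q) : p ≥ 0 and p² + q² = 1} ∪ {(0,q) : −1 ≤ q ≤ 1}; that is, ∂Ω is a past limit cycle for every non-stationary physical trajectory. -/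
/-- The physical phase space `Ω = {(p,q) : p > 0 ∧ p² + q² < 1}`. -/
def Omega : Set (ℝ × ℝ) := {x : ℝ × ℝ | 0 < x.1 ∧ x.1 ^ 2 + x.2 ^ 2 < 1}

/-!
In the variables `u = p²`, `w = 1 - p² - q²`, `q` the system is symmetric under exchanging `u` and
`w` and reversing the sign of `q`, and `(u w)' = 4 q² u w`. Backward in time the product `u w`
decreases, and away from the equilibrium it cannot stay above a positive level, so it tends to zero
and every limit point lies on the boundary.

For `1 ≤ α`, the orbit cannot stay below a level `q = c < 1` at early times. Indeed, where `u w` is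
small and `1 - q²` is bounded below, `q` moves at a definite speed, so `q` would be negative at all
early times; but then `w` is nonincreasing in time, which bounds `1 - q²` from below all the way
back, and `q` would leave `[-1, 1]`. By symmetry `q` oscillates between `-1` and `1`. Whenever it
crosses a level `c` upwards, `(α + c) w ≤ (α - c) u`, so `w²` is controlled by `u w` and tends to
zero: these crossings accumulate at the point of the circular arc at height `c`. The downward
crossings accumulate likewise at the point of the segment `p = 0`.
-/

open Filter Set Topology

section RealFunctions

variable {f f' : ℝ → ℝ}

lemma mul_sub_le_sub_of_le_deriv {T κ : ℝ} (hf : ∀ t ≤ T, HasDerivAt f (f' t) t)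
    (hf' : ∀ t ≤ T, κ ≤ f' t) {s t : ℝ} (hst : s ≤ t) (ht : t ≤ T) :
    κ * (t - s) ≤ f t - f s := by
  have hint : interior (Iic T) ⊆ Iic T := interior_subset
  exact (convex_Iic T).mul_sub_le_image_sub_of_le_deriv
    (fun x hx => (hf x hx).continuousAt.continuousWithinAt)
    (fun x hx => (hf x (hint hx)).differentiableAt.differentiableWithinAt)
    (fun x hx => (hf' x (hint hx)).trans_eq (hf x (hint hx)).deriv.symm)
    s (hst.trans ht) t ht hst

lemma tendsto_atBot_atBot_of_le_deriv {T κ : ℝ} (hκ : 0 < κ)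
    (hf : ∀ t ≤ T, HasDerivAt f (f' t) t) (hf' : ∀ t ≤ T, κ ≤ f' t) :
    Tendsto f atBot atBot := by
  have hslope : ∀ t ≤ T, f t ≤ κ * t + (f T - κ * T) := fun t ht => by
    linarith [mul_sub_le_sub_of_le_deriv hf hf' ht le_rfl]
  exact tendsto_atBot_mono' atBot ((eventually_le_atBot T).mono hslope)
    (tendsto_atBot_add_const_right _ _ (tendsto_id.const_mul_atBot hκ))

lemma frequently_abs_deriv_lt {M δ : ℝ} (hδ : 0 < δ) (hf : ∀ᶠ t in atBot, HasDerivAt f (f' t) t)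
    (hM : ∀ᶠ t in atBot, |f t| ≤ M) : ∃ᶠ t in atBot, |f' t| < δ := by
  rw [frequently_atBot]
  intro S
  obtain ⟨R, hR⟩ := eventually_atBot.1 ((hf.and hM).and (eventually_le_atBot S))
  have hM0 : 0 ≤ M := (abs_nonneg _).trans (hR R le_rfl).1.2
  have hlen : 0 < (2 * M + 1) / δ := by positivity
  obtain ⟨t, ht, hslope⟩ := exists_hasDerivAt_eq_slope f f' (sub_lt_self R hlen)
    (fun t ht => (hR t ht.2).1.1.continuousAt.continuousWithinAt)
    (fun t ht => (hR t ht.2.le).1.1)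
  refine ⟨t, (hR t ht.2.le).2, ?_⟩
  have hvar : |f R - f (R - (2 * M + 1) / δ)| ≤ M + M :=
    (abs_sub _ _).trans (add_le_add (hR R le_rfl).1.2 (hR _ (by linarith)).1.2)
  rw [hslope, sub_sub_cancel, abs_div, abs_of_pos hlen, div_lt_iff₀ hlen,
    mul_div_cancel₀ _ hδ.ne']
  linarith

lemma frequently_le_and_deriv_eq_zero {a : ℝ} (hf : ∀ᶠ t in atBot, HasDerivAt f (f' t) t)
    (hge : ∃ᶠ t in atBot, a ≤ f t) (hlt : ∃ᶠ t in atBot, f t < a) :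
    ∃ᶠ t in atBot, a ≤ f t ∧ f' t = 0 := by
  rw [frequently_atBot] at hge hlt ⊢
  intro S
  obtain ⟨R, hR⟩ := eventually_atBot.1 (hf.and (eventually_le_atBot S))
  obtain ⟨r, hrR, hra⟩ := hlt R
  obtain ⟨t, htr, hat⟩ := hge r
  obtain ⟨l, hlt, hla⟩ := hlt t
  have hcont : ContinuousOn f (Icc l r) :=
    fun x hx => (hR x (hx.2.trans hrR)).1.continuousAt.continuousWithinAt
  obtain ⟨m, hm, hmax⟩ := isCompact_Icc.exists_isMaxOn (nonempty_Icc.2 (hlt.trans htr)) hcont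
  have ham : a ≤ f m := hat.trans (hmax ⟨hlt, htr⟩)
  have hlm : l < m := hm.1.lt_of_ne (by rintro rfl; exact hla.not_ge ham)
  have hmr : m < r := hm.2.lt_of_ne (by rintro rfl; exact hra.not_ge ham)
  obtain ⟨hderiv, hmS⟩ := hR m (hm.2.trans hrR)
  exact ⟨m, hmS, ham, (hmax.isLocalMax (Icc_mem_nhds hlm hmr)).hasDerivAt_eq_zero hderiv⟩

lemma eventually_lt_of_le_abs_deriv {M a δ : ℝ} (hδ : 0 < δ)
    (hf : ∀ᶠ t in atBot, HasDerivAt f (f' t) t) (hM : ∀ᶠ t in atBot, |f t| ≤ M)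
    (hspeed : ∀ᶠ t in atBot, a ≤ f t → δ ≤ |f' t|) : ∀ᶠ t in atBot, f t < a := by
  by_contra hge
  simp only [not_eventually, not_lt] at hge
  have hlt : ∃ᶠ t in atBot, f t < a :=
    ((frequently_abs_deriv_lt hδ hf hM).and_eventually hspeed).mono fun t ht =>
      lt_of_not_ge fun hat => ht.1.not_ge (ht.2 hat)
  obtain ⟨t, ⟨hat, hzero⟩, hδt⟩ :=
    ((frequently_le_and_deriv_eq_zero hf hge hlt).and_eventually hspeed).exists
  have := hδt hat
  rw [hzero, abs_zero] at this
  exact this.not_gt hδ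

lemma exists_eq_and_deriv_nonneg {a b c : ℝ} (hab : a ≤ b)
    (hf : ∀ t ∈ Icc a b, HasDerivAt f (f' t) t) (ha : f a ≤ c) (hb : c < f b) :
    ∃ t ∈ Icc a b, f t = c ∧ 0 ≤ f' t := by
  by_contra! h
  exact hb.not_ge (image_le_of_deriv_right_lt_deriv_boundary
    (fun t ht => (hf t ht).continuousAt.continuousWithinAt)
    (fun t ht => (hf t (Ico_subset_Icc_self ht)).hasDerivWithinAt) ha
    (fun t => hasDerivAt_const t c)
    (fun t ht => h t (Ico_subset_Icc_self ht)) (right_mem_Icc.2 hab))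

lemma frequently_eq_and_deriv_nonneg {c : ℝ} (hf : ∀ᶠ t in atBot, HasDerivAt f (f' t) t)
    (hgt : ∃ᶠ t in atBot, c < f t) (hle : ∃ᶠ t in atBot, f t ≤ c) :
    ∃ᶠ t in atBot, f t = c ∧ 0 ≤ f' t := by
  rw [frequently_atBot] at hgt hle ⊢
  intro S
  obtain ⟨R, hR⟩ := eventually_atBot.1 (hf.and (eventually_le_atBot S))
  obtain ⟨b, hbR, hcb⟩ := hgt R
  obtain ⟨a, hab, hac⟩ := hle b
  obtain ⟨t, ht, hcross⟩ :=
    exists_eq_and_deriv_nonneg hab (fun t ht => (hR t (ht.2.trans hbR)).1) hac hcb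
  exact ⟨t, (hR t (ht.2.trans hbR)).2, hcross⟩

end RealFunctions

section ClusterPoints

variable {ι X : Type*} [TopologicalSpace X] {l : Filter ι} {x : X}

lemma mapClusterPt_iff_exists_seq_tendsto [FirstCountableTopology X] [l.IsCountablyGenerated]
    {γ : ι → X} :
    MapClusterPt x l γ ↔
      ∃ s : ℕ → ι, Tendsto s atTop l ∧ Tendsto (fun n => γ (s n)) atTop (𝓝 x) :=
  ⟨fun hx => hx.exists_seq_tendsto.imp fun _ hs => hs.symm,
    fun ⟨_, hs, hx⟩ => MapClusterPt.of_comp hs hx.mapClusterPt⟩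

lemma eq_of_mapClusterPt_of_tendsto {Y : Type*} [TopologicalSpace Y] [T2Space Y]
    {γ : ι → X} {F : X → Y} {y : Y} (hx : MapClusterPt x l γ) (hF : ContinuousAt F x)
    (hlim : Tendsto (fun t => F (γ t)) l (𝓝 y)) : F x = y :=
  eq_of_nhds_neBot ((hx.continuousAt_comp hF).clusterPt.mono hlim)

end ClusterPoints

/-- Backward half-orbits, on `(-∞, T]`, of the system in the variables `u = p²`, `w = 1 - p² - q²`
and `q`. The relation between the three variables is kept as the field `sum_eq`, so that `u` and `w`
play symmetric roles. -/
structure IsPastOrbit (α T : ℝ) (u w q : ℝ → ℝ) : Prop where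
  u_pos : ∀ t ≤ T, 0 < u t
  w_pos : ∀ t ≤ T, 0 < w t
  sum_eq : ∀ t ≤ T, u t + w t + q t ^ 2 = 1
  deriv_u : ∀ t ≤ T, HasDerivAt u (2 * (q t ^ 2 - α * q t) * u t) t
  deriv_w : ∀ t ≤ T, HasDerivAt w (2 * (q t ^ 2 + α * q t) * w t) t
  deriv_q : ∀ t ≤ T, HasDerivAt q ((α - q t) * u t - (α + q t) * w t) t

namespace IsPastOrbit

variable {α T : ℝ} {u w q : ℝ → ℝ}

lemma swap (h : IsPastOrbit α T u w q) : IsPastOrbit α T w u (fun t => -q t) where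
  u_pos := h.w_pos
  w_pos := h.u_pos
  sum_eq t ht := by linarith [h.sum_eq t ht]
  deriv_u t ht := (h.deriv_w t ht).congr_deriv (by ring)
  deriv_w t ht := (h.deriv_u t ht).congr_deriv (by ring)
  deriv_q t ht := (h.deriv_q t ht).fun_neg.congr_deriv (by ring)

lemma mono (h : IsPastOrbit α T u w q) {S : ℝ} (hS : S ≤ T) : IsPastOrbit α S u w q where
  u_pos t ht := h.u_pos t (ht.trans hS)
  w_pos t ht := h.w_pos t (ht.trans hS)
  sum_eq t ht := h.sum_eq t (ht.trans hS)
  deriv_u t ht := h.deriv_u t (ht.trans hS)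
  deriv_w t ht := h.deriv_w t (ht.trans hS)
  deriv_q t ht := h.deriv_q t (ht.trans hS)

lemma abs_q_le_one (h : IsPastOrbit α T u w q) {t : ℝ} (ht : t ≤ T) : |q t| ≤ 1 := by
  rw [← sq_le_one_iff_abs_le_one]
  linarith [h.u_pos t ht, h.w_pos t ht, h.sum_eq t ht]

lemma eventually_hasDerivAt_q (h : IsPastOrbit α T u w q) :
    ∀ᶠ t in atBot, HasDerivAt q ((α - q t) * u t - (α + q t) * w t) t :=
  (eventually_le_atBot T).mono h.deriv_q

lemma eventually_abs_q_le_one (h : IsPastOrbit α T u w q) : ∀ᶠ t in atBot, |q t| ≤ 1 :=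
  (eventually_le_atBot T).mono fun _ => h.abs_q_le_one

lemma hasDerivAt_mul (h : IsPastOrbit α T u w q) {t : ℝ} (ht : t ≤ T) :
    HasDerivAt (fun t => u t * w t) (4 * q t ^ 2 * (u t * w t)) t :=
  ((h.deriv_u t ht).fun_mul (h.deriv_w t ht)).congr_deriv (by ring)

lemma monotoneOn_mul (h : IsPastOrbit α T u w q) : MonotoneOn (fun t => u t * w t) (Iic T) := by
  have hderiv : ∀ t ≤ T, 0 ≤ 4 * q t ^ 2 * (u t * w t) := fun t ht =>
    mul_nonneg (by positivity) (mul_pos (h.u_pos t ht) (h.w_pos t ht)).le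
  intro s _ t ht hst
  linarith [mul_sub_le_sub_of_le_deriv (fun t ht => h.hasDerivAt_mul ht) hderiv hst ht]

lemma antitoneOn_w_of_q_nonpos (h : IsPastOrbit α T u w q) (hα : 1 ≤ α)
    (hq : ∀ t ≤ T, q t ≤ 0) : AntitoneOn w (Iic T) := by
  have hderiv : ∀ t ≤ T, 0 ≤ -(2 * (q t ^ 2 + α * q t) * w t) := by
    intro t ht
    have hfactor : q t * (q t + α) ≤ 0 :=
      mul_nonpos_of_nonpos_of_nonneg (hq t ht) (by linarith [(abs_le.1 (h.abs_q_le_one ht)).1])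
    nlinarith [mul_nonpos_of_nonpos_of_nonneg hfactor (h.w_pos t ht).le]
  intro s _ t ht hst
  linarith [mul_sub_le_sub_of_le_deriv (fun t ht => (h.deriv_w t ht).fun_neg) hderiv hst ht]

/-- The right-hand side is the derivative of `α q (u - w)`, which makes up for that of `u w`
vanishing on `q = 0`. -/
lemma le_mul_deriv_mul_sub (h : IsPastOrbit α T u w q) {t : ℝ} (ht : t ≤ T) :
    α ^ 2 / 2 * (1 - 4 * (u t * w t)) - (3 / 2 + 4 * α ^ 2) * q t ^ 2 ≤
      α * (((α - q t) * u t - (α + q t) * w t) * (u t - w t) +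
        q t * (2 * (q t ^ 2 - α * q t) * u t - 2 * (q t ^ 2 + α * q t) * w t)) := by
  have hu := h.u_pos t ht
  have hw := h.w_pos t ht
  have hsum := h.sum_eq t ht
  generalize u t = x at *
  generalize w t = y at *
  generalize q t = z at *
  have hdiff : 1 - 2 * z ^ 2 - 4 * (x * y) ≤ (x - y) ^ 2 := by
    have : (x + y) ^ 2 = (1 - z ^ 2) ^ 2 := by rw [← hsum]; ring
    nlinarith [sq_nonneg (z ^ 2)]
  have hmixed : α * (z * (x - y) * (x + y)) ≤ α ^ 2 * (x - y) ^ 2 / 2 + z ^ 2 / 2 := by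
    have : (z * (x + y)) ^ 2 ≤ z ^ 2 := by
      rw [mul_pow]
      exact mul_le_of_le_one_right (sq_nonneg z) (by nlinarith [sq_nonneg z])
    nlinarith [sq_nonneg (α * (x - y) - z * (x + y))]
  have hcubic : -((1 + α ^ 2) * z ^ 2) ≤ 2 * α * z ^ 2 * (z * (x - y)) := by
    have : (z * (x - y)) ^ 2 ≤ 1 := by
      rw [mul_pow]
      exact mul_le_one₀ (by linarith) (sq_nonneg _) (by nlinarith [sq_nonneg z])
    nlinarith [mul_nonneg (sq_nonneg z) (sq_nonneg (α + z * (x - y)))]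
  have hsum_le : α ^ 2 * z ^ 2 * (x + y) ≤ α ^ 2 * z ^ 2 :=
    mul_le_of_le_one_right (by positivity) (by nlinarith [sq_nonneg z])
  nlinarith [mul_le_mul_of_nonneg_left hdiff (sq_nonneg α)]

lemma abs_mul_sub_le_one (h : IsPastOrbit α T u w q) {t : ℝ} (ht : t ≤ T) :
    |q t * (u t - w t)| ≤ 1 := by
  rw [abs_mul]
  refine mul_le_one₀ (h.abs_q_le_one ht) (abs_nonneg _) (abs_le.2 ?_)
  constructor <;> linarith [h.u_pos t ht, h.w_pos t ht, h.sum_eq t ht, sq_nonneg (q t)]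

lemma exists_mul_lt (h : IsPastOrbit α T u w q) (hα : α ≠ 0) (hT : u T * w T < 1 / 4)
    {L : ℝ} (hL : 0 < L) : ∃ t ≤ T, u t * w t < L := by
  by_contra! hge
  set A := (3 / 2 + 4 * α ^ 2) / (4 * L) with hA
  have hAL : 4 * A * L = 3 / 2 + 4 * α ^ 2 := by rw [hA]; field_simp
  have hA0 : 0 ≤ A := by positivity
  have hκ : 0 < α ^ 2 / 2 * (1 - 4 * (u T * w T)) := mul_pos (by positivity) (by linarith)
  have hbot : Tendsto (fun t => A * (u t * w t) + α * (q t * (u t - w t))) atBot atBot := by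
    refine tendsto_atBot_atBot_of_le_deriv hκ (fun t ht =>
      ((h.hasDerivAt_mul ht).const_mul A).fun_add
        (((h.deriv_q t ht).fun_mul ((h.deriv_u t ht).fun_sub (h.deriv_w t ht))).const_mul α))
      fun t ht => ?_
    have hdissipation : (3 / 2 + 4 * α ^ 2) * q t ^ 2 ≤ A * (4 * q t ^ 2 * (u t * w t)) := by
      rw [← hAL]
      nlinarith [mul_le_mul_of_nonneg_left (hge t ht) (by positivity : 0 ≤ 4 * A * q t ^ 2)]
    have hmono : u t * w t ≤ u T * w T := h.monotoneOn_mul ht self_mem_Iic ht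
    linarith [h.le_mul_deriv_mul_sub ht, mul_le_mul_of_nonneg_left hmono (sq_nonneg α)]
  obtain ⟨t, hlt, ht⟩ := ((hbot.eventually_lt_atBot (-|α|)).and (eventually_le_atBot T)).exists
  have hprod : 0 ≤ A * (u t * w t) :=
    mul_nonneg hA0 (mul_pos (h.u_pos t ht) (h.w_pos t ht)).le
  have hcross : |α * (q t * (u t - w t))| ≤ |α| := by
    rw [abs_mul]
    exact mul_le_of_le_one_right (abs_nonneg α) (h.abs_mul_sub_le_one ht)
  linarith [(abs_le.1 hcross).1]

lemma tendsto_mul (h : IsPastOrbit α T u w q) (hα : α ≠ 0) (hT : u T * w T < 1 / 4) :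
    Tendsto (fun t => u t * w t) atBot (𝓝 0) := by
  refine tendsto_order.2 ⟨fun a ha => ?_, fun a ha => ?_⟩
  · filter_upwards [eventually_le_atBot T] with t ht
    exact ha.trans (mul_pos (h.u_pos t ht) (h.w_pos t ht))
  · obtain ⟨S, hST, hSa⟩ := h.exists_mul_lt hα hT ha
    filter_upwards [eventually_le_atBot S] with t ht
    exact (h.monotoneOn_mul (ht.trans hST) hST ht).trans_lt hSa

lemma eventually_le_abs_deriv_q (h : IsPastOrbit α T u w q) (hα : 1 ≤ α)
    (hV : Tendsto (fun t => u t * w t) atBot (𝓝 0)) {b : ℝ} (hb : 0 < b) :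
    ∀ᶠ t in atBot, b ≤ 1 - q t ^ 2 →
      b ^ 2 / 4 ≤ |(α - q t) * u t - (α + q t) * w t| := by
  set ε := b ^ 2 / (8 * α) with hε
  have hε0 : 0 < ε := by positivity
  have hαε : 2 * α * ε = b ^ 2 / 4 := by rw [hε]; field_simp; norm_num
  filter_upwards [hV.eventually_lt_const (pow_pos hε0 2), eventually_le_atBot T] with t hVt ht hbt
  have hw := h.w_pos t ht
  have hsum := h.sum_eq t ht
  obtain ⟨hq_ge, hq_le⟩ := abs_le.1 (h.abs_q_le_one ht)
  rw [le_abs']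
  rcases le_or_gt (u t) ε with hu | hu
  · left
    have hdrift : b * (b / 2) ≤ (u t + w t) * (α + q t) :=
      mul_le_mul (by linarith) (by nlinarith) (by positivity) (by linarith)
    nlinarith
  · right
    have hwε : w t ≤ ε := by nlinarith
    have hdrift : b * (b / 2) ≤ (u t + w t) * (α - q t) :=
      mul_le_mul (by linarith) (by nlinarith) (by positivity) (by linarith)
    nlinarith

lemma frequently_lt_q (h : IsPastOrbit α T u w q) (hα : 1 ≤ α)
    (hV : Tendsto (fun t => u t * w t) atBot (𝓝 0)) {c : ℝ} (hc : c < 1) :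
    ∃ᶠ t in atBot, c < q t := by
  intro hle
  have hneg : ∀ᶠ t in atBot, q t < 0 := by
    have hb : 0 < 1 - c := sub_pos.2 hc
    refine eventually_lt_of_le_abs_deriv (δ := (1 - c) ^ 2 / 4) (by positivity)
      h.eventually_hasDerivAt_q h.eventually_abs_q_le_one ?_
    filter_upwards [hle, h.eventually_le_abs_deriv_q hα hV hb] with t htc hspeed ht0
    exact hspeed (by nlinarith [not_lt.1 htc])
  obtain ⟨R, hR⟩ := eventually_atBot.1 (hneg.and (eventually_le_atBot T))
  have hRT : R ≤ T := (hR R le_rfl).2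
  have hwR := h.w_pos R hRT
  have hw : AntitoneOn w (Iic R) :=
    (h.mono hRT).antitoneOn_w_of_q_nonpos hα fun t ht => (hR t ht).1.le
  have hlow : ∀ᶠ t in atBot, q t < -1 := by
    refine eventually_lt_of_le_abs_deriv (δ := w R ^ 2 / 4) (by positivity)
      h.eventually_hasDerivAt_q h.eventually_abs_q_le_one ?_
    filter_upwards [h.eventually_le_abs_deriv_q hα hV hwR, eventually_le_atBot R]
      with t hspeed ht _
    have htT := ht.trans hRT
    exact hspeed (by linarith [hw ht self_mem_Iic ht, h.u_pos t htT, h.sum_eq t htT])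
  obtain ⟨t, hlt, hge⟩ := (hlow.and h.eventually_abs_q_le_one).exists
  linarith [(abs_le.1 hge).1]

lemma frequently_q_lt (h : IsPastOrbit α T u w q) (hα : 1 ≤ α)
    (hV : Tendsto (fun t => u t * w t) atBot (𝓝 0)) {c : ℝ} (hc : -1 < c) :
    ∃ᶠ t in atBot, q t < c := by
  have := h.swap.frequently_lt_q hα (hV.congr fun t => mul_comm _ _) (neg_lt.1 hc)
  simpa only [neg_lt_neg_iff] using this

lemma mapClusterPt_q_w_of_mem_Ioo (h : IsPastOrbit α T u w q) (hα : 1 ≤ α)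
    (hV : Tendsto (fun t => u t * w t) atBot (𝓝 0)) {c : ℝ} (hc : c ∈ Ioo (-1) 1) :
    MapClusterPt (c, 0) atBot (fun t => (q t, w t)) := by
  set U := {t | q t = c ∧ 0 ≤ (α - q t) * u t - (α + q t) * w t}
  have hfreq : ∃ᶠ t in atBot, t ∈ U :=
    frequently_eq_and_deriv_nonneg h.eventually_hasDerivAt_q (h.frequently_lt_q hα hV hc.2)
      ((h.frequently_q_lt hα hV hc.1).mono fun _ => le_of_lt)
  have : NeBot (atBot ⊓ 𝓟 U) := frequently_mem_iff_neBot.1 hfreq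
  have hαc : 0 < α + c := by linarith [hc.1]
  have hbound : ∀ t ≤ T, t ∈ U → w t ≤ √((α - c) / (α + c) * (u t * w t)) := by
    rintro t ht ⟨rfl, hcross⟩
    refine Real.le_sqrt_of_sq_le ?_
    rw [div_mul_eq_mul_div, le_div_iff₀ hαc]
    nlinarith [h.w_pos t ht]
  have hq : Tendsto q (atBot ⊓ 𝓟 U) (𝓝 c) :=
    tendsto_const_nhds.congr' ((eventually_inf_principal.2 (.of_forall fun _ ht => ht.1.symm)))
  have hw : Tendsto w (atBot ⊓ 𝓟 U) (𝓝 0) := by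
    have hsqrt := (hV.const_mul ((α - c) / (α + c))).sqrt
    rw [mul_zero, Real.sqrt_zero] at hsqrt
    refine squeeze_zero' ?_ ?_ (hsqrt.mono_left inf_le_left)
    · exact ((eventually_le_atBot T).mono fun t ht => (h.w_pos t ht).le).filter_mono inf_le_left
    · exact eventually_inf_principal.2 ((eventually_le_atBot T).mono hbound)
  exact (hq.prodMk_nhds hw).mapClusterPt.mono inf_le_left

lemma mapClusterPt_q_w (h : IsPastOrbit α T u w q) (hα : 1 ≤ α)
    (hV : Tendsto (fun t => u t * w t) atBot (𝓝 0)) {c : ℝ} (hc : c ∈ Icc (-1) 1) :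
    MapClusterPt (c, 0) atBot (fun t => (q t, w t)) := by
  have hclosed : IsClosed {c : ℝ | MapClusterPt (c, (0 : ℝ)) atBot fun t => (q t, w t)} :=
    isClosed_setOfPred_clusterPt.preimage (by fun_prop : Continuous fun c : ℝ => (c, (0 : ℝ)))
  rw [← closure_Ioo (by norm_num : (-1 : ℝ) ≠ 1)] at hc
  exact closure_minimal (fun c hc => h.mapClusterPt_q_w_of_mem_Ioo hα hV hc) hclosed hc

end IsPastOrbit

section PhysicalTrajectories

variable {α T : ℝ} {p q : ℝ → ℝ}

lemma isPastOrbit_sq (hp : ∀ t ∈ Iic T, HasDerivAt p (p t * q t ^ 2 - α * p t * q t) t)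
    (hq : ∀ t ∈ Iic T, HasDerivAt q (q t ^ 3 + α * q t ^ 2 - q t - α + 2 * α * p t ^ 2) t)
    (hΩ : ∀ t ∈ Iic T, (p t, q t) ∈ Omega) :
    IsPastOrbit α T (fun t => p t ^ 2) (fun t => 1 - p t ^ 2 - q t ^ 2) q where
  u_pos t ht := pow_pos (hΩ t ht).1 2
  w_pos t ht := by linarith [(hΩ t ht).2]
  sum_eq t _ := by ring
  deriv_u t ht := ((hp t ht).fun_pow 2).congr_deriv (by push_cast; ring)
  deriv_w t ht := ((((hp t ht).fun_pow 2).const_sub 1).fun_sub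
    ((hq t ht).fun_pow 2)).congr_deriv (by push_cast; ring)
  deriv_q t ht := (hq t ht).congr_deriv (by ring)

lemma eq_equilibrium_of_quarter_le {a b : ℝ} (ha : 0 < a)
    (h : 1 / 4 ≤ a ^ 2 * (1 - a ^ 2 - b ^ 2)) : (a, b) = (1 / √2, 0) := by
  have hsq : (a ^ 2 - 1 / 2) ^ 2 + (a * b) ^ 2 ≤ 0 := by linarith
  obtain ⟨ha_zero, hab_zero⟩ := (add_eq_zero_iff_of_nonneg (sq_nonneg _) (sq_nonneg _)).1
    (hsq.antisymm (by positivity))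
  have ha_half : a ^ 2 = 1 / 2 := sub_eq_zero.1 (pow_eq_zero_iff two_ne_zero |>.1 ha_zero)
  have hb : b = 0 := (mul_eq_zero.1 (pow_eq_zero_iff two_ne_zero |>.1 hab_zero)).resolve_left ha.ne'
  rw [hb, ← Real.sqrt_sq ha.le, ha_half, Real.sqrt_div zero_le_one, Real.sqrt_one]

lemma exists_sq_mul_lt_quarter (hp : ∀ t ≤ T, 0 < p t)
    (hne : ¬ ∀ t ∈ Iic T, (p t, q t) = ((1 / √2, 0) : ℝ × ℝ)) :
    ∃ S ≤ T, p S ^ 2 * (1 - p S ^ 2 - q S ^ 2) < 1 / 4 := by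
  by_contra! hge
  exact hne fun t ht => eq_equilibrium_of_quarter_le (hp t ht) (hge t ht)

lemma mem_boundary_of_mapClusterPt (hΩ : ∀ t ∈ Iic T, (p t, q t) ∈ Omega)
    (hV : Tendsto (fun t => p t ^ 2 * (1 - p t ^ 2 - q t ^ 2)) atBot (𝓝 0)) {x : ℝ × ℝ}
    (hx : MapClusterPt x atBot fun t => (p t, q t)) :
    x ∈ {x : ℝ × ℝ | 0 ≤ x.1 ∧ x.1 ^ 2 + x.2 ^ 2 = 1} ∪
      {x : ℝ × ℝ | x.1 = 0 ∧ -1 ≤ x.2 ∧ x.2 ≤ 1} := by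
  have hV0 : x.1 ^ 2 * (1 - x.1 ^ 2 - x.2 ^ 2) = 0 :=
    eq_of_mapClusterPt_of_tendsto hx (F := fun y => y.1 ^ 2 * (1 - y.1 ^ 2 - y.2 ^ 2))
      (by fun_prop) hV
  obtain ⟨s, hs, hlim⟩ := mapClusterPt_iff_exists_seq_tendsto.1 hx
  have hclosed : IsClosed ({y : ℝ × ℝ | 0 ≤ y.1} ∩ {y | y.1 ^ 2 + y.2 ^ 2 ≤ 1}) :=
    (isClosed_le (by fun_prop) (by fun_prop)).inter (isClosed_le (by fun_prop) (by fun_prop))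
  obtain ⟨hx1, hx_le⟩ : 0 ≤ x.1 ∧ x.1 ^ 2 + x.2 ^ 2 ≤ 1 := hclosed.mem_of_tendsto hlim
    ((hs.eventually (eventually_le_atBot T)).mono fun n hn =>
      ⟨(hΩ _ hn).1.le, (hΩ _ hn).2.le⟩)
  rcases mul_eq_zero.1 hV0 with hu | hw
  · have hx0 : x.1 = 0 := pow_eq_zero_iff two_ne_zero |>.1 hu
    exact Or.inr ⟨hx0, abs_le.1 (sq_le_one_iff_abs_le_one _ |>.1 (by linarith))⟩
  · exact Or.inl ⟨hx1, by linarith⟩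

lemma mapClusterPt_arc (h : IsPastOrbit α T (fun t => p t ^ 2) (fun t => 1 - p t ^ 2 - q t ^ 2) q)
    (hα : 1 ≤ α) (hp : ∀ t ≤ T, 0 < p t)
    (hV : Tendsto (fun t => p t ^ 2 * (1 - p t ^ 2 - q t ^ 2)) atBot (𝓝 0))
    {x : ℝ × ℝ} (hx : 0 ≤ x.1 ∧ x.1 ^ 2 + x.2 ^ 2 = 1) :
    MapClusterPt x atBot fun t => (p t, q t) := by
  obtain ⟨hx1, hx_eq⟩ := hx
  have hc : x.2 ∈ Icc (-1) 1 := abs_le.1 (sq_le_one_iff_abs_le_one _ |>.1 (by nlinarith))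
  have hclus := (h.mapClusterPt_q_w hα hV hc).continuousAt_comp
    (f := fun y : ℝ × ℝ => (√(1 - y.1 ^ 2 - y.2), y.1)) (by fun_prop)
  have hpoint : (√(1 - x.2 ^ 2 - 0), x.2) = x := by
    rw [← hx_eq, add_sub_cancel_right, sub_zero, Real.sqrt_sq hx1]
  have hcurve : ∀ t ≤ T, (√(1 - q t ^ 2 - (1 - p t ^ 2 - q t ^ 2)), q t) = (p t, q t) := by
    intro t ht
    rw [show 1 - q t ^ 2 - (1 - p t ^ 2 - q t ^ 2) = p t ^ 2 by ring, Real.sqrt_sq (hp t ht).le]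
  rw [hpoint] at hclus
  rwa [mapClusterPt_def, ← map_congr ((eventually_le_atBot T).mono hcurve)]

lemma mapClusterPt_segment
    (h : IsPastOrbit α T (fun t => p t ^ 2) (fun t => 1 - p t ^ 2 - q t ^ 2) q)
    (hα : 1 ≤ α) (hp : ∀ t ≤ T, 0 < p t)
    (hV : Tendsto (fun t => p t ^ 2 * (1 - p t ^ 2 - q t ^ 2)) atBot (𝓝 0))
    {x : ℝ × ℝ} (hx : x.1 = 0 ∧ -1 ≤ x.2 ∧ x.2 ≤ 1) :
    MapClusterPt x atBot fun t => (p t, q t) := by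
  obtain ⟨hx1, hc_ge, hc_le⟩ := hx
  have hclus := (h.swap.mapClusterPt_q_w hα (hV.congr fun t => mul_comm _ _) (c := -x.2)
    ⟨by linarith, by linarith⟩).continuousAt_comp
    (f := fun y : ℝ × ℝ => (√y.2, -y.1)) (by fun_prop)
  have hpoint : (√0, - -x.2) = x := by rw [Real.sqrt_zero, neg_neg, ← hx1]
  have hcurve : ∀ t ≤ T, (√(p t ^ 2), - -q t) = (p t, q t) := by
    intro t ht
    rw [Real.sqrt_sq (hp t ht).le, neg_neg]
  rw [hpoint] at hclus
  rwa [mapClusterPt_def, ← map_congr ((eventually_le_atBot T).mono hcurve)]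

end PhysicalTrajectories

theorem stmt12_general (α : ℝ) (hα : 1 ≤ α) (τ₀ : ℝ) (p q : ℝ → ℝ)
    (hp : ∀ τ ∈ Set.Iic τ₀, HasDerivAt p (p τ * (q τ) ^ 2 - α * p τ * q τ) τ)
    (hq : ∀ τ ∈ Set.Iic τ₀,
      HasDerivAt q ((q τ) ^ 3 + α * (q τ) ^ 2 - q τ - α + 2 * α * (p τ) ^ 2) τ)
    (hΩ : ∀ τ ∈ Set.Iic τ₀, (p τ, q τ) ∈ Omega)
    (hne : ¬ ∀ τ ∈ Set.Iic τ₀, (p τ, q τ) = ((1 / Real.sqrt 2, 0) : ℝ × ℝ)) :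
    {x : ℝ × ℝ | ∃ s : ℕ → ℝ, Filter.Tendsto s Filter.atTop Filter.atBot ∧
        Filter.Tendsto (fun n => (p (s n), q (s n))) Filter.atTop (nhds x)} =
      {x : ℝ × ℝ | 0 ≤ x.1 ∧ x.1 ^ 2 + x.2 ^ 2 = 1} ∪
        {x : ℝ × ℝ | x.1 = 0 ∧ -1 ≤ x.2 ∧ x.2 ≤ 1} := by
  have hp_pos : ∀ t ≤ τ₀, 0 < p t := fun t ht => (hΩ t ht).1
  have horbit := isPastOrbit_sq hp hq hΩ
  obtain ⟨S, hS, hquarter⟩ := exists_sq_mul_lt_quarter hp_pos hne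
  have hV : Tendsto (fun t => p t ^ 2 * (1 - p t ^ 2 - q t ^ 2)) atBot (𝓝 0) :=
    (horbit.mono hS).tendsto_mul (by positivity) hquarter
  ext x
  rw [mem_ofPred_eq, ← mapClusterPt_iff_exists_seq_tendsto (γ := fun t => (p t, q t))]
  constructor
  · exact mem_boundary_of_mapClusterPt hΩ hV
  · rintro (harc | hsegment)
    · exact mapClusterPt_arc horbit hα hp_pos hV harc
    · exact mapClusterPt_segment horbit hα hp_pos hV hsegment

/-- For `α > 1`, the set of limit points as `τ → −∞` of any non-stationary physical
trajectory is exactly the boundary curve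
`∂Ω = {(p,q) : p ≥ 0 ∧ p² + q² = 1} ∪ {(0,q) : −1 ≤ q ≤ 1}`:
`∂Ω` is a past limit cycle. -/
theorem stmt12 (α : ℝ) (hα : 1 < α) (τ₀ : ℝ) (p q : ℝ → ℝ)
    (hp : ∀ τ ∈ Set.Iic τ₀, HasDerivAt p (p τ * (q τ) ^ 2 - α * p τ * q τ) τ)
    (hq : ∀ τ ∈ Set.Iic τ₀,
      HasDerivAt q ((q τ) ^ 3 + α * (q τ) ^ 2 - q τ - α + 2 * α * (p τ) ^ 2) τ)
    (hΩ : ∀ τ ∈ Set.Iic τ₀, (p τ, q τ) ∈ Omega)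
    (hne : ¬ ∀ τ ∈ Set.Iic τ₀, (p τ, q τ) = ((1 / Real.sqrt 2, 0) : ℝ × ℝ)) :
    {x : ℝ × ℝ | ∃ s : ℕ → ℝ, Filter.Tendsto s Filter.atTop Filter.atBot ∧
        Filter.Tendsto (fun n => (p (s n), q (s n))) Filter.atTop (nhds x)} =
      {x : ℝ × ℝ | 0 ≤ x.1 ∧ x.1 ^ 2 + x.2 ^ 2 = 1} ∪
        {x : ℝ × ℝ | x.1 = 0 ∧ -1 ≤ x.2 ∧ x.2 ≤ 1} :=
  stmt12_general α hα.le τ₀ p q hp hq hΩ hne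
end

section
/- Let λ > √6 and let (K, φ) be a non-trivial scalar field cosmology on (0, t₀] such that K(t) → ∞ as t → 0⁺. Define the spatial volume element v(t) = exp(−∫_t^{t₀} K(u) du), so that v'(t) = K(t) v(t) and v(t₀) = 1. Then for every m > 1 there exist v₀ > 0 and δ ∈ (0, t₀) such that v(t) > v₀ · t^m for all t ∈ (0, δ); that is, near the singularity the volume element expands faster than any power law with power greater than one. -/
/-!
Write `v = exp (-N)` with `N = ∫_t^{t₀} K`. The constraint gives `(log K)' = -K + 3V(φ)/K`; without
the potential term `v' = Kv` would be constant and `v` linear in `t`, so that term has to be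
absorbed. For `G = φφ'/K` one finds `G' = (φ'² - φ(V' + rV))/K` with `r = 3φ'/K ∈ [-√6, √6]`, and a
potential growing faster than `exp (√6|φ|)` satisfies `MV ≤ φ(V' + rV) + C` for every `M`. Taking
`M = 3/η`, the function `log K + ηG` therefore decreases at rate at least `(1 - η)K` once `K` is
large, while `G ≤ log K`. This integrates to `(1 + η) log K ≥ (1 - η)N + const`. For
`m = (1 + η)/(1 - η)` it says that `exp (-N/m)` has derivative bounded below by a positive constant,
so it exceeds a positive multiple of `t`.
-/

open Filter Set Topology

section Calculus

lemma mul_half_sub_lt_of_le_deriv {a b c t : ℝ} {f f' : ℝ → ℝ}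
    (hf : ∀ s ∈ Ioo a b, HasDerivAt f (f' s) s) (hf' : ∀ s ∈ Ioo a b, c ≤ f' s)
    (hpos : ∀ s ∈ Ioo a b, 0 < f s) (ht : t ∈ Ioo a b) :
    c * ((t - a) / 2) < f t := by
  have hmid : (a + t) / 2 ∈ Ioo a b := ⟨by linarith [ht.1], by linarith [ht.1, ht.2]⟩
  have hincr : c * (t - (a + t) / 2) ≤ f t - f ((a + t) / 2) := by
    refine (convex_Ioo a b).mul_sub_le_image_sub_of_le_deriv
      (fun s hs => (hf s hs).continuousAt.continuousWithinAt) ?_ ?_ _ hmid t ht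
      (by linarith [ht.1]) <;> rw [interior_Ioo]
    · exact fun s hs => (hf s hs).differentiableAt.differentiableWithinAt
    · exact fun s hs => (hf s hs).deriv ▸ hf' s hs
  linarith [hpos _ hmid]

lemma hasDerivAt_integral_left_of_continuousOn {a b t : ℝ} {f : ℝ → ℝ}
    (hf : ContinuousOn f (Ioc a b)) (ht : t ∈ Ioo a b) :
    HasDerivAt (fun s => ∫ u in s..b, f u) (-f t) t := by
  refine intervalIntegral.integral_hasDerivAt_left (ContinuousOn.intervalIntegrable ?_)
    ((hf.mono Ioo_subset_Ioc_self).stronglyMeasurableAtFilter isOpen_Ioo t ht)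
    (hf.continuousAt (Ioc_mem_nhds ht.1 ht.2))
  rw [uIcc_of_le ht.2.le]
  exact hf.mono (Icc_subset_Ioc ht.1 le_rfl)

lemma exists_mul_rpow_lt_exp_neg {b m c : ℝ} (hm : 0 < m) {K N : ℝ → ℝ}
    (hN : ∀ t ∈ Ioo 0 b, HasDerivAt N (-K t) t) (hK : ∀ t ∈ Ioo 0 b, 0 < K t)
    (hlog : ∀ t ∈ Ioo 0 b, N t / m + c ≤ Real.log (K t)) :
    ∃ v₀ > (0 : ℝ), ∀ t ∈ Ioo 0 b, v₀ * t ^ m < Real.exp (-N t) := by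
  have hderiv : ∀ t ∈ Ioo 0 b,
      HasDerivAt (fun s => Real.exp (-N s / m)) (Real.exp (-N t / m) * (K t / m)) t :=
    fun t ht => by simpa only [neg_neg] using ((hN t ht).fun_neg.div_const m).exp
  have hderiv_ge : ∀ t ∈ Ioo 0 b, Real.exp c / m ≤ Real.exp (-N t / m) * (K t / m) := by
    intro t ht
    have hexp : Real.exp (N t / m + c) ≤ K t := (Real.le_log_iff_exp_le (hK t ht)).1 (hlog t ht)
    calc Real.exp c / m = Real.exp (-N t / m) * (Real.exp (N t / m + c) / m) := by
          rw [← mul_div_assoc, ← Real.exp_add]; ring_nf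
      _ ≤ Real.exp (-N t / m) * (K t / m) := by gcongr
  refine ⟨(Real.exp c / m / 2) ^ m, by positivity, fun t ht => ?_⟩
  have ht0 : 0 < t := ht.1
  have hlin : Real.exp c / m / 2 * t < Real.exp (-N t / m) := by
    linarith [mul_half_sub_lt_of_le_deriv hderiv hderiv_ge (fun s _ => Real.exp_pos _) ht]
  calc (Real.exp c / m / 2) ^ m * t ^ m = (Real.exp c / m / 2 * t) ^ m :=
        (Real.mul_rpow (by positivity) ht0.le).symm
    _ < Real.exp (-N t / m) ^ m := Real.rpow_lt_rpow (by positivity) hlin hm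
    _ = Real.exp (-N t) := by rw [← Real.exp_mul, div_mul_cancel₀ _ hm.ne']

end Calculus

/-- A potential growing faster than `exp (√6 * |x|)`. Instead of a lower bound on `|V' / V|`, the
growth is encoded by the virial estimate `virial_bound`, in which `r` stands for the ratio `3φ'/K`;
the exponent in `exp_two_mul_abs_le` is the one that turns `V(φ) ≤ K²` into `|φ| ≤ log K`.
Differentiability excludes the junk value of `deriv V`. -/
structure IsSteepPotential (V : ℝ → ℝ) : Prop where
  differentiable : Differentiable ℝ V
  exp_two_mul_abs_le (x : ℝ) : Real.exp (2 * |x|) ≤ V x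
  virial_bound {M : ℝ} (hM : 0 < M) :
    ∃ C, ∀ x r : ℝ, |r| ≤ √6 → M * V x ≤ x * (deriv V x + r * V x) + C

/-- The spatially flat, isotropic cosmologies on `s` with a scalar field `φ` of velocity `ψ` in
the potential `V`; `K` is the expansion (mean curvature). -/
structure IsScalarFieldCosmology (V K φ ψ : ℝ → ℝ) (s : Set ℝ) : Prop where
  hasDerivAt_field : ∀ t ∈ s, HasDerivAt φ (ψ t) t
  hasDerivAt_velocity : ∀ t ∈ s, HasDerivAt ψ (-K t * ψ t - deriv V (φ t)) t
  hasDerivAt_expansion : ∀ t ∈ s, HasDerivAt K (-(3 / 2) * ψ t ^ 2) t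
  constraint : ∀ t ∈ s, K t ^ 2 = 3 * V (φ t) + 3 / 2 * ψ t ^ 2
  expansion_pos : ∀ t ∈ s, 0 < K t

lemma IsSteepPotential.pos {V : ℝ → ℝ} (hV : IsSteepPotential V) (x : ℝ) : 0 < V x :=
  (Real.exp_pos _).trans_le (hV.exp_two_mul_abs_le x)

namespace IsScalarFieldCosmology

variable {V K φ ψ : ℝ → ℝ} {s : Set ℝ} {t : ℝ}

lemma sq_velocity_le (h : IsScalarFieldCosmology V K φ ψ s) (ht : t ∈ s) (hV : 0 ≤ V (φ t)) :
    ψ t ^ 2 ≤ 2 / 3 * K t ^ 2 := by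
  linarith [h.constraint t ht]

lemma abs_velocity_le (h : IsScalarFieldCosmology V K φ ψ s) (ht : t ∈ s) (hV : 0 ≤ V (φ t)) :
    |ψ t| ≤ K t :=
  abs_le_of_sq_le_sq (by linarith [h.sq_velocity_le ht hV, sq_nonneg (K t)])
    (h.expansion_pos t ht).le

lemma abs_three_mul_velocity_div_expansion_le (h : IsScalarFieldCosmology V K φ ψ s)
    (ht : t ∈ s) (hV : 0 ≤ V (φ t)) : |3 * (ψ t / K t)| ≤ √6 := by
  have hK := h.expansion_pos t ht
  refine Real.abs_le_sqrt ?_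
  rw [mul_pow, div_pow, ← mul_div_assoc, div_le_iff₀ (by positivity)]
  linarith [h.sq_velocity_le ht hV]

lemma field_mul_velocity_div_expansion_le_log (h : IsScalarFieldCosmology V K φ ψ s)
    (hV : IsSteepPotential V) (ht : t ∈ s) : φ t * ψ t / K t ≤ Real.log (K t) := by
  have hK := h.expansion_pos t ht
  have hφ : |φ t| ≤ Real.log (K t) := by
    have hexp : Real.exp (2 * |φ t|) ≤ K t ^ 2 := by
      linarith [hV.exp_two_mul_abs_le (φ t), hV.pos (φ t), h.constraint t ht, sq_nonneg (ψ t)]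
    have hlog := (Real.le_log_iff_exp_le (by positivity)).2 hexp
    rw [Real.log_pow, Nat.cast_ofNat] at hlog
    linarith
  rw [div_le_iff₀ hK]
  calc φ t * ψ t ≤ |φ t| * |ψ t| := by rw [← abs_mul]; exact le_abs_self _
    _ ≤ Real.log (K t) * K t :=
        mul_le_mul hφ (h.abs_velocity_le ht (hV.pos _).le) (abs_nonneg _)
          ((abs_nonneg _).trans hφ)

lemma hasDerivAt_log_expansion (h : IsScalarFieldCosmology V K φ ψ s) (ht : t ∈ s) :
    HasDerivAt (fun u => Real.log (K u)) (-K t + 3 * V (φ t) / K t) t := by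
  have hK := (h.expansion_pos t ht).ne'
  convert! (h.hasDerivAt_expansion t ht).log hK using 1
  field_simp
  linear_combination -2 * h.constraint t ht

lemma hasDerivAt_field_mul_velocity_div_expansion (h : IsScalarFieldCosmology V K φ ψ s)
    (ht : t ∈ s) :
    HasDerivAt (fun u => φ u * ψ u / K u)
      ((ψ t ^ 2 - φ t * (deriv V (φ t) + 3 * (ψ t / K t) * V (φ t))) / K t) t := by
  have hK := (h.expansion_pos t ht).ne'
  convert! ((h.hasDerivAt_field t ht).mul (h.hasDerivAt_velocity t ht)).div
    (h.hasDerivAt_expansion t ht) hK using 1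
  simp only [Pi.mul_apply]
  field_simp
  linear_combination 2 * φ t * ψ t * h.constraint t ht

lemma deriv_log_add_virial_le (h : IsScalarFieldCosmology V K φ ψ s) (hV : IsSteepPotential V)
    {η C : ℝ} (hη : 0 < η)
    (hC : ∀ x r : ℝ, |r| ≤ √6 → 3 / η * V x ≤ x * (deriv V x + r * V x) + C)
    (ht : t ∈ s) (hCK : 3 * C ≤ K t ^ 2) :
    -K t + 3 * V (φ t) / K t +
      η * ((ψ t ^ 2 - φ t * (deriv V (φ t) + 3 * (ψ t / K t) * V (φ t))) / K t) ≤
      -((1 - η) * K t) := by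
  have hK := h.expansion_pos t ht
  have hVφ := (hV.pos (φ t)).le
  set vir := φ t * (deriv V (φ t) + 3 * (ψ t / K t) * V (φ t)) with hvir
  have hpot : 3 * V (φ t) ≤ η * (vir + C) := by
    have hbound := hC (φ t) _ (h.abs_three_mul_velocity_div_expansion_le ht hVφ)
    rwa [← hvir, div_mul_eq_mul_div, div_le_iff₀' hη] at hbound
  have hkin : η * (C + ψ t ^ 2) ≤ η * K t ^ 2 := by
    gcongr
    linarith [h.sq_velocity_le ht hVφ]
  calc -K t + 3 * V (φ t) / K t + η * ((ψ t ^ 2 - vir) / K t)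
      = (-K t ^ 2 + 3 * V (φ t) + η * (ψ t ^ 2 - vir)) / K t := by field_simp
    _ ≤ (-((1 - η) * K t ^ 2)) / K t := by gcongr; linarith
    _ = -((1 - η) * K t) := by field_simp

variable {t₀ : ℝ}

lemma hasDerivAt_integral_expansion (h : IsScalarFieldCosmology V K φ ψ (Ioc 0 t₀))
    (ht : t ∈ Ioo 0 t₀) : HasDerivAt (fun u => ∫ x in u..t₀, K x) (-K t) t :=
  hasDerivAt_integral_left_of_continuousOn
    (fun u hu => (h.hasDerivAt_expansion u hu).continuousAt.continuousWithinAt) ht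

lemma exists_antitoneOn_log_add_virial_sub_integral
    (h : IsScalarFieldCosmology V K φ ψ (Ioc 0 t₀)) (hV : IsSteepPotential V) (ht₀ : 0 < t₀)
    (hsing : Tendsto K (𝓝[>] 0) atTop) {η : ℝ} (hη : 0 < η) :
    ∃ b ∈ Ioo 0 t₀, AntitoneOn (fun t => Real.log (K t) + η * (φ t * ψ t / K t) -
      (1 - η) * ∫ u in t..t₀, K u) (Ioc 0 b) := by
  obtain ⟨C, hC⟩ := hV.virial_bound (M := 3 / η) (by positivity)
  have hlarge : ∀ᶠ t in 𝓝[>] 0, 3 * C ≤ K t ^ 2 :=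
    ((tendsto_pow_atTop two_ne_zero).comp hsing).eventually_ge_atTop (3 * C)
  obtain ⟨b, hb, hsub⟩ :=
    mem_nhdsGT_iff_exists_Ioc_subset.1 (hlarge.and (Ioo_mem_nhdsGT ht₀))
  refine ⟨b, (hsub ⟨hb, le_rfl⟩).2, ?_⟩
  have hderiv := fun t (ht : t ∈ Ioc 0 b) =>
    have hts : t ∈ Ioc 0 t₀ := Ioo_subset_Ioc_self (hsub ht).2
    ((h.hasDerivAt_log_expansion hts).add
      ((h.hasDerivAt_field_mul_velocity_div_expansion hts).const_mul η)).sub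
      ((h.hasDerivAt_integral_expansion (hsub ht).2).const_mul (1 - η))
  refine antitoneOn_of_hasDerivWithinAt_nonpos (convex_Ioc 0 b)
    (fun t ht => (hderiv t ht).continuousAt.continuousWithinAt)
    (fun t ht => (hderiv t (interior_subset ht)).hasDerivWithinAt) fun t ht => ?_
  obtain ⟨hCK, htI⟩ := hsub (interior_subset ht)
  linarith [h.deriv_log_add_virial_le hV hη hC (Ioo_subset_Ioc_self htI) hCK]

lemma exists_integral_add_le_log (h : IsScalarFieldCosmology V K φ ψ (Ioc 0 t₀))
    (hV : IsSteepPotential V) (ht₀ : 0 < t₀) (hsing : Tendsto K (𝓝[>] 0) atTop)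
    {η : ℝ} (hη : 0 < η) :
    ∃ b ∈ Ioo 0 t₀, ∃ c : ℝ, ∀ t ∈ Ioo 0 b,
      (1 - η) * (∫ u in t..t₀, K u) + c ≤ (1 + η) * Real.log (K t) := by
  obtain ⟨b, hb, hanti⟩ := h.exists_antitoneOn_log_add_virial_sub_integral hV ht₀ hsing hη
  refine ⟨b, hb, Real.log (K b) + η * (φ b * ψ b / K b) - (1 - η) * ∫ u in b..t₀, K u,
    fun t ht => ?_⟩
  have hmono := hanti (Ioo_subset_Ioc_self ht) (right_mem_Ioc.2 hb.1) ht.2.le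
  have hG : η * (φ t * ψ t / K t) ≤ η * Real.log (K t) := by
    gcongr
    exact h.field_mul_velocity_div_expansion_le_log hV ⟨ht.1, (ht.2.trans hb.2).le⟩
  linarith

end IsScalarFieldCosmology

theorem stmt18_general {V K φ ψ : ℝ → ℝ} {t₀ : ℝ} (hV : IsSteepPotential V) (ht₀ : 0 < t₀)
    (h : IsScalarFieldCosmology V K φ ψ (Ioc 0 t₀)) (hsing : Tendsto K (𝓝[>] 0) atTop)
    (m : ℝ) (hm : 1 < m) :
    ∃ v₀ > (0 : ℝ), ∃ δ : ℝ, 0 < δ ∧ δ < t₀ ∧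
      ∀ t : ℝ, 0 < t → t < δ → v₀ * t ^ m < Real.exp (-∫ u in t..t₀, K u) := by
  have hm0 : 0 < m := by linarith
  obtain ⟨η, hη, hηm⟩ : ∃ η > 0, m * (1 - η) = 1 + η :=
    ⟨(m - 1) / (m + 1), div_pos (by linarith) (by linarith), by field_simp; ring⟩
  obtain ⟨b, hb, c, hlog⟩ := h.exists_integral_add_le_log hV ht₀ hsing hη
  have hsub : Ioo 0 b ⊆ Ioo 0 t₀ := Ioo_subset_Ioo_right hb.2.le
  obtain ⟨v₀, hv₀, hv⟩ := exists_mul_rpow_lt_exp_neg (c := c / (1 + η)) hm0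
    (fun t ht => h.hasDerivAt_integral_expansion (hsub ht))
    (fun t ht => h.expansion_pos t (Ioo_subset_Ioc_self (hsub ht))) fun t ht => by
      have hfrac : (∫ u in t..t₀, K u) / m = (1 - η) * (∫ u in t..t₀, K u) / (1 + η) := by
        rw [div_eq_div_iff hm0.ne' (by linarith), ← hηm]
        ring
      rw [hfrac, ← add_div, div_le_iff₀' (by linarith)]
      exact hlog t ht
  exact ⟨v₀, hv₀, b, hb.1, hb.2, fun t ht htb => hv t ⟨ht, htb⟩⟩

/-- The potential `V` of the cosmologies considered, i.e. `2 * cosh (lam * x)`. -/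
noncomputable def symmExpPotential (lam x : ℝ) : ℝ :=
  Real.exp (lam * x) + Real.exp (-(lam * x))

section SymmExpPotential

variable {lam : ℝ}

lemma hasDerivAt_symmExpPotential (lam x : ℝ) :
    HasDerivAt (symmExpPotential lam)
      (lam * (Real.exp (lam * x) - Real.exp (-(lam * x)))) x := by
  have hlin : HasDerivAt (fun y => lam * y) lam x := by
    simpa only [mul_one] using (hasDerivAt_id' x).const_mul lam
  convert! hlin.exp.add hlin.neg.exp using 1
  simp only [Pi.neg_apply]
  ring

lemma deriv_symmExpPotential (lam x : ℝ) :
    deriv (symmExpPotential lam) x = lam * (Real.exp (lam * x) - Real.exp (-(lam * x))) :=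
  (hasDerivAt_symmExpPotential lam x).deriv

lemma exp_two_mul_abs_le_symmExpPotential (hlam : 2 ≤ lam) (x : ℝ) :
    Real.exp (2 * |x|) ≤ symmExpPotential lam x := by
  have hexp : Real.exp (2 * |x|) ≤ Real.exp (lam * |x|) := by gcongr
  have hE := Real.exp_pos (lam * x)
  have hF := Real.exp_pos (-(lam * x))
  unfold symmExpPotential
  rcases abs_choice x with hx | hx <;> rw [hx] at hexp ⊢
  · linarith
  · rw [mul_neg lam] at hexp
    linarith

-- The right-hand side is the maximum over `x`: use `y ≤ exp (y - 1)` with `y = c * (M / a - x)`.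
lemma sub_mul_mul_exp_le {a c : ℝ} (ha : 0 < a) (hc : 0 < c) (M x : ℝ) :
    (M - a * x) * Real.exp (c * x) ≤ a / c * Real.exp (c * (M / a) - 1) := by
  have hy : c * (M / a - x) ≤ Real.exp (c * (M / a - x) - 1) := by
    linarith [Real.add_one_le_exp (c * (M / a - x) - 1)]
  calc (M - a * x) * Real.exp (c * x)
      = a / c * (c * (M / a - x) * Real.exp (c * x)) := by field_simp
    _ ≤ a / c * (Real.exp (c * (M / a - x) - 1) * Real.exp (c * x)) := by gcongr
    _ = a / c * Real.exp (c * (M / a) - 1) := by rw [← Real.exp_add]; ring_nf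

lemma symmExpPotential_virial_bound (hlam : √6 < lam) {M : ℝ} (hM : 0 ≤ M) {r : ℝ}
    (hr : |r| ≤ √6) (x : ℝ) :
    M * symmExpPotential lam x ≤
      x * (deriv (symmExpPotential lam) x + r * symmExpPotential lam x) +
        4 * Real.exp (lam * (M / (lam - √6))) := by
  have hlam0 : 0 < lam := (Real.sqrt_nonneg 6).trans_lt hlam
  have hgap : 0 < lam - √6 := sub_pos.2 hlam
  have hbound : ∀ ρ y : ℝ, |ρ| ≤ √6 →
      (M - (lam + ρ) * y) * Real.exp (lam * y) ≤ 2 * Real.exp (lam * (M / (lam - √6))) := by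
    intro ρ y hρ
    obtain ⟨hρl, hρu⟩ := abs_le.1 hρ
    have hrate : lam - √6 ≤ lam + ρ := by linarith
    have hratio : (lam + ρ) / lam ≤ 2 := by rw [div_le_iff₀ hlam0]; linarith
    have hfrac : M / (lam + ρ) ≤ M / (lam - √6) := by gcongr
    calc (M - (lam + ρ) * y) * Real.exp (lam * y)
        ≤ (lam + ρ) / lam * Real.exp (lam * (M / (lam + ρ)) - 1) :=
          sub_mul_mul_exp_le (hgap.trans_le hrate) hlam0 M y
      _ ≤ 2 * Real.exp (lam * (M / (lam - √6))) := by
          gcongr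
          linarith [mul_le_mul_of_nonneg_left hfrac hlam0.le]
  have hpos := hbound r x hr
  have hneg := hbound (-r) (-x) (by rwa [abs_neg])
  rw [mul_neg lam] at hneg
  rw [deriv_symmExpPotential, symmExpPotential]
  linarith

lemma isSteepPotential_symmExpPotential (hlam : √6 < lam) :
    IsSteepPotential (symmExpPotential lam) where
  differentiable x := (hasDerivAt_symmExpPotential lam x).differentiableAt
  exp_two_mul_abs_le := exp_two_mul_abs_le_symmExpPotential
    ((Real.le_sqrt_of_sq_le (by norm_num)).trans hlam.le)
  virial_bound hM := ⟨_, fun x _ hr => symmExpPotential_virial_bound hlam hM.le hr x⟩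

end SymmExpPotential

open intervalIntegral in
/-- Let `λ > √6` and let `(K, φ)` (with `ψ = φ'`) be a non-trivial scalar field cosmology
with potential `V(φ) = exp(λφ) + exp(−λφ)` on `(0, t₀]` such that `K(t) → ∞` as `t → 0⁺`.
With the volume element `v(t) = exp(−∫_t^{t₀} K(u) du)`, for every `m > 1` there exist
`v₀ > 0` and `δ ∈ (0, t₀)` such that `v(t) > v₀ · t^m` for all `t ∈ (0, δ)`. -/
theorem stmt18 (lam : ℝ) (hlam : Real.sqrt 6 < lam) (t₀ : ℝ) (ht₀ : 0 < t₀)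
    (K φ ψ : ℝ → ℝ)
    (hφ : ∀ t ∈ Set.Ioc (0 : ℝ) t₀, HasDerivAt φ (ψ t) t)
    (hψ : ∀ t ∈ Set.Ioc (0 : ℝ) t₀, HasDerivAt ψ
      (-K t * ψ t - lam * (Real.exp (lam * φ t) - Real.exp (-(lam * φ t)))) t)
    (hK : ∀ t ∈ Set.Ioc (0 : ℝ) t₀, HasDerivAt K (-(3 / 2) * (ψ t) ^ 2) t)
    (hcon : ∀ t ∈ Set.Ioc (0 : ℝ) t₀,
      (K t) ^ 2 = 3 * (Real.exp (lam * φ t) + Real.exp (-(lam * φ t)))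
        + (3 / 2) * (ψ t) ^ 2)
    (hKpos : ∀ t ∈ Set.Ioc (0 : ℝ) t₀, 0 < K t)
    (hnt : ∃ t ∈ Set.Ioc (0 : ℝ) t₀, ψ t ≠ 0)
    (hsing : Filter.Tendsto K (nhdsWithin 0 (Set.Ioi 0)) Filter.atTop) :
    ∀ m : ℝ, 1 < m → ∃ v₀ > (0 : ℝ), ∃ δ : ℝ, 0 < δ ∧ δ < t₀ ∧
      ∀ t : ℝ, 0 < t → t < δ →
        v₀ * t ^ m < Real.exp (-∫ u in t..t₀, K u) := by
  exact stmt18_general (isSteepPotential_symmExpPotential hlam) ht₀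
    ⟨hφ, by simpa only [deriv_symmExpPotential] using hψ, hK, hcon, hKpos⟩ hsing
end
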